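/- (Gradient drift lemma.) Suppose each f_i is L-smooth (Assumption 1), λ̃ᵗ = Ãᵀμ for some μ, and X^{t+1} = βXᵗ + (1−β)X̂ᵗ − α(∇𝐟(Xᵗ) + λ̃ᵗ + θÃᵀÃX̂ᵗ) with α, θ > 0 and β = 1 − αθM. Then ‖∇𝐟((𝟙 ⊗ I_d)X̄^{t+1}) − ∇𝐟((𝟙 ⊗ I_d)X̄ᵗ)‖² ≤ 3α²nL²‖∇f(X̄ᵗ)‖² + 3α²L⁴‖Xᵗ‖²_{K̃} + 3α²θ²M²L²‖X̂ᵗ − Xᵗ‖². -/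

import Mathlib

/-!
Every row of the incidence matrix sums to zero, so averaging over the nodes kills both the dual
variable `λ̃ = Ãᵀμ` and the Laplacian term. The primal step therefore moves the average by
`αθM · avg(X̂ - X) - α∇f(x̄) - α · avg(∇𝐟(X) - ∇𝐟((𝟙 ⊗ I_d)x̄))` (`xbar_step`).

`L`-smoothness bounds the drift by `n L²` times the squared norm of this displacement, which is at
most three times the sum of the squared norms of its three terms. Jensen's inequality
(`n_mul_sqnorm_xbar_le`) absorbs the factor `n` in the two averaged terms, and a second use of
smoothness together with `‖X‖²_K̃ = ‖X - (𝟙 ⊗ I_d)x̄‖²` (`wnorm2_Ktil`) bounds the gradient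
mismatch.
-/

open Matrix MeasureTheory ProbabilityTheory
open scoped Kronecker

noncomputable section

/-- squared Euclidean norm ‖v‖² of a finitely indexed real vector. -/
def sqnorm {ι : Type*} [Fintype ι] (v : ι → ℝ) : ℝ := ∑ i, (v i) ^ 2

/-- Euclidean norm ‖v‖. -/
def enorm' {ι : Type*} [Fintype ι] (v : ι → ℝ) : ℝ := Real.sqrt (sqnorm v)

/-- matrix-weighted squared (semi)norm ‖v‖²_P = vᵀ P v. -/
def wnorm2 {ι : Type*} [Fintype ι] (P : Matrix ι ι ℝ) (v : ι → ℝ) : ℝ := v ⬝ᵥ P.mulVec v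

/-- matrix-weighted inner product ⟨x, y⟩_P = xᵀ P y. -/
def winner {ι : Type*} [Fintype ι] (P : Matrix ι ι ℝ) (x y : ι → ℝ) : ℝ := x ⬝ᵥ P.mulVec y

/-- the consensus projector K̃ = (Iₙ − (1/n)𝟙𝟙ᵀ) ⊗ I_d. -/
def Ktil (n d : ℕ) : Matrix (Fin n × Fin d) (Fin n × Fin d) ℝ :=
  ((1 : Matrix (Fin n) (Fin n) ℝ) - (n : ℝ)⁻¹ • Matrix.of (fun _ _ => (1 : ℝ))) ⊗ₖ
    (1 : Matrix (Fin d) (Fin d) ℝ)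

/-- `A` is a (signed) incidence matrix of an undirected graph: each row has exactly one `+1`
entry and one `-1` entry, all other entries being `0`. -/
def IsIncidence {e n : ℕ} (A : Matrix (Fin e) (Fin n) ℝ) : Prop :=
  ∀ r : Fin e, ∃ i j : Fin n, i ≠ j ∧ A r i = 1 ∧ A r j = -1 ∧
    ∀ k : Fin n, k ≠ i → k ≠ j → A r k = 0

/-- `Q` is the Moore–Penrose pseudoinverse of `S` (the four Penrose conditions). -/
def IsMoorePenrose {ι : Type*} [Fintype ι] [DecidableEq ι] (S Q : Matrix ι ι ℝ) : Prop :=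
  S * Q * S = S ∧ Q * S * Q = Q ∧ (S * Q)ᵀ = S * Q ∧ (Q * S)ᵀ = Q * S

/-- the ℓ₂ operator (spectral) norm of a square matrix. -/
def specNorm {ι : Type*} [Fintype ι] [DecidableEq ι] (S : Matrix ι ι ℝ) : ℝ :=
  ‖Matrix.toEuclideanCLM (𝕜 := ℝ) S‖

/-- Ã = A ⊗ I_d. -/
def Atil {e n : ℕ} (d : ℕ) (A : Matrix (Fin e) (Fin n) ℝ) :
    Matrix (Fin e × Fin d) (Fin n × Fin d) ℝ :=
  A ⊗ₖ (1 : Matrix (Fin d) (Fin d) ℝ)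

/-- the (tensored) graph Laplacian ÃᵀÃ. -/
def lapl {e n : ℕ} (d : ℕ) (A : Matrix (Fin e) (Fin n) ℝ) :
    Matrix (Fin n × Fin d) (Fin n × Fin d) ℝ :=
  (Atil d A)ᵀ * Atil d A

/-- the network average X̄ = (1/n)(𝟙ᵀ ⊗ I_d)X. -/
def xbar {n d : ℕ} (X : Fin n × Fin d → ℝ) : Fin d → ℝ := fun j => (n : ℝ)⁻¹ * ∑ i, X (i, j)

/-- the consensus embedding (𝟙 ⊗ I_d)x̄ of a vector x̄ ∈ ℝ^d into ℝ^{nd}. -/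
def consVec {d : ℕ} (n : ℕ) (x : Fin d → ℝ) : Fin n × Fin d → ℝ := fun p => x p.2

/-- the stacked gradient ∇𝐟(X) = (∇f₁(X₁), …, ∇f_n(X_n)). -/
def gradF {n d : ℕ} (gradf : Fin n → (Fin d → ℝ) → (Fin d → ℝ)) (X : Fin n × Fin d → ℝ) :
    Fin n × Fin d → ℝ := fun p => gradf p.1 (fun j => X (p.1, j)) p.2

/-- the averaged objective f(x̄) = (1/n)∑ᵢ fᵢ(x̄). -/
def fbar {n d : ℕ} (f : Fin n → (Fin d → ℝ) → ℝ) (x : Fin d → ℝ) : ℝ :=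
  (n : ℝ)⁻¹ * ∑ i, f i x

/-- the averaged gradient ∇f(x̄) = (1/n)∑ᵢ ∇fᵢ(x̄). -/
def gradfbar {n d : ℕ} (gradf : Fin n → (Fin d → ℝ) → (Fin d → ℝ)) (x : Fin d → ℝ) :
    Fin d → ℝ := fun j => (n : ℝ)⁻¹ * ∑ i, gradf i x j

/-- a gradient vector, seen as a continuous linear functional on ℝ^d. -/
def dotCLM {d : ℕ} (g : Fin d → ℝ) : (Fin d → ℝ) →L[ℝ] ℝ :=
  ∑ j, g j • ContinuousLinearMap.proj j

/-- the auxiliary dual-tracking variable vᵗ = α(λ̃ᵗ + ∇𝐟((𝟙 ⊗ I_d)X̄ᵗ)). -/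
def vTi {n d : ℕ} (gradf : Fin n → (Fin d → ℝ) → (Fin d → ℝ)) (α : ℝ)
    (lam X : Fin n × Fin d → ℝ) : Fin n × Fin d → ℝ :=
  α • (lam + gradF gradf (consVec n (xbar X)))

/-- δ̃ = max{(1−δ)²(1−δ/2)²/((1−δ/2)²−(1−δ)²), 1}. -/
def deltaTil (δ : ℝ) : ℝ := max ((1 - δ) ^ 2 * (1 - δ / 2) ^ 2 / ((1 - δ / 2) ^ 2 - (1 - δ) ^ 2)) 1

/-- δ₂ = max{16η/δ, 1}. -/
def delta2 (δ η : ℝ) : ℝ := max (16 * η / δ) 1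

/-- δ₁ = 12·max{2, 2/(ρ̃₂η), δ₂δ̃}. -/
def delta1 (δ η ρ₂ : ℝ) : ℝ := 12 * max (max 2 (2 / (ρ₂ * η))) (delta2 δ η * deltaTil δ)

/-- θ_lb. -/
def thetaLb (n : ℕ) (L a η ρ₁ ρ₂ δ : ℝ) : ℝ :=
  max (4 * L ^ 2 / (n * ρ₂ * a))
    ((2 / ρ₂) * (1 + 2 * L + 8 * η * ρ₁ ^ 2 / ρ₂ +
      delta1 δ η ρ₂ * (3 / 2 + 3 * L ^ 2 + η * ρ₁ + ρ₁ ^ 2 / 2)))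

/-- α_ub = (max{16η, δ}/(320θ²))·min{1/M², na/M², 1/ρ̃₁²}. -/
def alphaUb (n : ℕ) (a η δ θ M ρ₁ : ℝ) : ℝ :=
  (max (16 * η) δ / (320 * θ ^ 2)) * min (min (1 / M ^ 2) (n * a / M ^ 2)) (1 / ρ₁ ^ 2)

/-- one step of the TiCoPD recursion, driven by compression randomness ξ. -/
def TiCoPD {e n d : ℕ} {Ω S : Type*} (A : Matrix (Fin e) (Fin n) ℝ)
    (gradf : Fin n → (Fin d → ℝ) → (Fin d → ℝ)) (α β θ η : ℝ)
    (ξ : ℕ → Ω → S) (Q : (Fin n × Fin d → ℝ) → S → (Fin n × Fin d → ℝ))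
    (X Xhat lam : ℕ → Ω → (Fin n × Fin d → ℝ)) : Prop :=
  ∀ t ω,
    X (t + 1) ω = β • X t ω + (1 - β) • Xhat t ω -
        α • (gradF gradf (X t ω) + lam t ω + θ • (lapl d A).mulVec (Xhat t ω)) ∧
    lam (t + 1) ω = lam t ω + η • (lapl d A).mulVec (Xhat t ω) ∧
    Xhat (t + 1) ω = Xhat t ω + Q (X (t + 1) ω - Xhat t ω) (ξ (t + 1) ω)

/-- the Lyapunov function F_t of Theorem 1. -/
def FLyap {n d : ℕ} (f : Fin n → (Fin d → ℝ) → ℝ)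
    (gradf : Fin n → (Fin d → ℝ) → (Fin d → ℝ))
    (Qtil : Matrix (Fin n × Fin d) (Fin n × Fin d) ℝ)
    (fstar a α η θ δ₁ δ₂ : ℝ) (X Xhat lam : Fin n × Fin d → ℝ) : ℝ :=
  fbar f (xbar X) - fstar +
    (a / (η * α)) *
      wnorm2 (Qtil + (α * ((δ₁ / 2) * (θ + η) - θ - δ₂ * θ)) • Ktil n d) (vTi gradf α lam X) +
    a * wnorm2 (Ktil n d) X +
    δ₁ * a * winner (Ktil n d) X (vTi gradf α lam X) +
    δ₂ * a * sqnorm (Xhat - X)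

/-- Averaging annihilates the range of `Ãᵀ`, since every row of an incidence matrix sums to zero. -/
lemma xbar_Atil_transpose_mulVec {n d e : ℕ} (A : Matrix (Fin e) (Fin n) ℝ) (hA : IsIncidence A)
    (v : Fin e × Fin d → ℝ) : xbar ((Atil d A)ᵀ.mulVec v) = 0 := by
  have hrow : ∀ r, ∑ k, A r k = 0 := by
    intro r
    obtain ⟨i, j, hij, hi, hj, h0⟩ := hA r
    rw [Finset.sum_eq_add i j hij (fun k _ hk => h0 k hk.1 hk.2) (by simp) (by simp), hi, hj]
    norm_num
  funext j
  simp only [xbar, Matrix.mulVec, dotProduct, Pi.zero_apply, Atil, Matrix.transpose_apply,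
    Matrix.kroneckerMap_apply]
  rw [Finset.sum_comm, Finset.sum_eq_zero, mul_zero]
  intro r _
  have key : ∑ i, A r.1 i * (1 : Matrix (Fin d) (Fin d) ℝ) r.2 j = 0 := by
    rw [← Finset.sum_mul, hrow, zero_mul]
  rw [← Finset.sum_mul]
  exact mul_eq_zero_of_left key _

lemma xbar_lapl_mulVec {n d e : ℕ} (A : Matrix (Fin e) (Fin n) ℝ) (hA : IsIncidence A)
    (v : Fin n × Fin d → ℝ) : xbar ((lapl d A).mulVec v) = 0 := by
  rw [lapl, ← Matrix.mulVec_mulVec, xbar_Atil_transpose_mulVec A hA]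

lemma xbar_add {n d : ℕ} (X Y : Fin n × Fin d → ℝ) : xbar (X + Y) = xbar X + xbar Y := by
  funext j
  simp [xbar, Finset.sum_add_distrib, mul_add]

lemma xbar_smul {n d : ℕ} (c : ℝ) (X : Fin n × Fin d → ℝ) : xbar (c • X) = c • xbar X := by
  funext j
  simp [xbar, ← Finset.mul_sum, mul_left_comm]

lemma xbar_sub {n d : ℕ} (X Y : Fin n × Fin d → ℝ) : xbar (X - Y) = xbar X - xbar Y := by
  funext j
  simp [xbar, mul_sub]

lemma sqnorm_nonneg {ι : Type*} [Fintype ι] (v : ι → ℝ) : 0 ≤ sqnorm v :=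
  Finset.sum_nonneg fun _ _ => sq_nonneg _

lemma enorm'_sq {ι : Type*} [Fintype ι] (v : ι → ℝ) : enorm' v ^ 2 = sqnorm v :=
  Real.sq_sqrt (sqnorm_nonneg v)

lemma sqnorm_prod {n d : ℕ} (X : Fin n × Fin d → ℝ) :
    sqnorm X = ∑ i, sqnorm (fun j => X (i, j)) :=
  Fintype.sum_prod_type _

/-- Jensen's inequality for the network average. -/
lemma n_mul_sqnorm_xbar_le {n d : ℕ} (hn : 0 < n) (X : Fin n × Fin d → ℝ) :
    n * sqnorm (xbar X) ≤ sqnorm X := by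
  have hn' : (0 : ℝ) < n := Nat.cast_pos.mpr hn
  rw [sqnorm, sqnorm, Fintype.sum_prod_type_right, Finset.mul_sum]
  refine Finset.sum_le_sum fun j _ => ?_
  have h := sq_sum_le_card_mul_sum_sq (s := Finset.univ) (f := fun i : Fin n => X (i, j))
  rw [Finset.card_univ, Fintype.card_fin] at h
  calc (n : ℝ) * (xbar X j) ^ 2 = (n : ℝ)⁻¹ * (∑ i, X (i, j)) ^ 2 := by
        simp only [xbar]; field_simp
    _ ≤ (n : ℝ)⁻¹ * (n * ∑ i, X (i, j) ^ 2) := by gcongr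
    _ = ∑ i, X (i, j) ^ 2 := by field_simp

lemma sqnorm_sub_sub_le {ι : Type*} [Fintype ι] (u v w : ι → ℝ) :
    sqnorm (u - v - w) ≤ 3 * (sqnorm u + sqnorm v + sqnorm w) := by
  simp only [sqnorm, ← Finset.sum_add_distrib, Finset.mul_sum, Pi.sub_apply]
  refine Finset.sum_le_sum fun i _ => ?_
  nlinarith [sq_nonneg (u i + v i), sq_nonneg (u i + w i), sq_nonneg (v i - w i)]

lemma sqnorm_smul {ι : Type*} [Fintype ι] (c : ℝ) (v : ι → ℝ) :
    sqnorm (c • v) = c ^ 2 * sqnorm v := by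
  simp [sqnorm, mul_pow, Finset.mul_sum]

lemma Ktil_mulVec {n d : ℕ} (X : Fin n × Fin d → ℝ) :
    (Ktil n d).mulVec X = X - consVec n (xbar X) := by
  funext ⟨i, j⟩
  simp only [Ktil, Matrix.mulVec, dotProduct, Matrix.kroneckerMap_apply, Matrix.sub_apply,
    Matrix.smul_apply, Matrix.of_apply, Matrix.one_apply, Pi.sub_apply, consVec, xbar,
    Fintype.sum_prod_type, smul_eq_mul, mul_one, mul_ite, mul_zero, ite_mul, zero_mul,
    Finset.sum_ite_eq, Finset.mem_univ, if_true]
  simp [sub_mul, Finset.sum_sub_distrib, Finset.mul_sum]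

/-- `K̃` is an orthogonal projector, so the weighted seminorm `‖X‖²_K̃` is the squared distance from
`X` to consensus. -/
lemma wnorm2_Ktil {n d : ℕ} (hn : 0 < n) (X : Fin n × Fin d → ℝ) :
    wnorm2 (Ktil n d) X = sqnorm (X - consVec n (xbar X)) := by
  have hn' : (n : ℝ) ≠ 0 := Nat.cast_ne_zero.mpr hn.ne'
  rw [wnorm2, Ktil_mulVec]
  simp only [dotProduct, sqnorm, Fintype.sum_prod_type_right, Pi.sub_apply, consVec]
  refine Finset.sum_congr rfl fun j _ => ?_
  have hs : ∑ i, X (i, j) = n * xbar X j := by simp only [xbar]; field_simp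
  have h0 : ∑ i, (X (i, j) - xbar X j) = 0 := by
    simp [Finset.sum_sub_distrib, hs]
  have h1 : ∑ i, xbar X j * (X (i, j) - xbar X j) = 0 := by
    rw [← Finset.mul_sum, h0, mul_zero]
  rw [← sub_eq_zero, ← Finset.sum_sub_distrib, ← h1]
  exact Finset.sum_congr rfl fun i _ => by ring

/-- Blockwise `L`-smoothness makes the stacked gradient `L`-Lipschitz. Squaring needs no sign
condition on `L`, because the left side of `hlip` is nonnegative. -/
lemma sqnorm_gradF_sub_le {n d : ℕ} (gradf : Fin n → (Fin d → ℝ) → (Fin d → ℝ)) (L : ℝ)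
    (hlip : ∀ i x y, enorm' (gradf i x - gradf i y) ≤ L * enorm' (x - y))
    (X Y : Fin n × Fin d → ℝ) :
    sqnorm (gradF gradf X - gradF gradf Y) ≤ L ^ 2 * sqnorm (X - Y) := by
  rw [sqnorm_prod, sqnorm_prod, Finset.mul_sum]
  refine Finset.sum_le_sum fun i _ => ?_
  have h := pow_le_pow_left₀ (Real.sqrt_nonneg _)
    (hlip i (fun j => X (i, j)) (fun j => Y (i, j))) 2
  rw [mul_pow, enorm'_sq] at h
  change enorm' _ ^ 2 ≤ _ at h
  rw [enorm'_sq] at h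
  exact h

lemma sqnorm_consVec_sub {n d : ℕ} (x y : Fin d → ℝ) :
    sqnorm (consVec n x - consVec n y) = n * sqnorm (x - y) := by
  rw [sqnorm_prod]
  simp [consVec, sqnorm]

/-- The average moves by the inexact gradient step plus the compression error: the dual variable
and the Laplacian term have zero average. -/
lemma xbar_step {n d e : ℕ} (A : Matrix (Fin e) (Fin n) ℝ) (hA : IsIncidence A)
    (gradf : Fin n → (Fin d → ℝ) → (Fin d → ℝ)) (μv : Fin e × Fin d → ℝ) (α β θ : ℝ)
    (X Xhat : Fin n × Fin d → ℝ) :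
    xbar (β • X + (1 - β) • Xhat -
        α • (gradF gradf X + (Atil d A)ᵀ.mulVec μv + θ • (lapl d A).mulVec Xhat)) - xbar X =
      (1 - β) • xbar (Xhat - X) - α • gradfbar gradf (xbar X) -
        α • xbar (gradF gradf X - gradF gradf (consVec n (xbar X))) := by
  have hg : gradfbar gradf (xbar X) = xbar (gradF gradf (consVec n (xbar X))) := rfl
  rw [hg]
  simp only [xbar_add, xbar_sub, xbar_smul, xbar_Atil_transpose_mulVec A hA,
    xbar_lapl_mulVec A hA]
  module

/-- **Gradient drift lemma.**  If each fᵢ is L-smooth, λ̃ᵗ = Ãᵀμ and X^{t+1} is the TiCoPD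
primal step with β = 1 − αθM, then
‖∇𝐟((𝟙⊗I_d)X̄^{t+1}) − ∇𝐟((𝟙⊗I_d)X̄ᵗ)‖² ≤ 3α²nL²‖∇f(X̄ᵗ)‖² + 3α²L⁴‖Xᵗ‖²_K̃
  + 3α²θ²M²L²‖X̂ᵗ − Xᵗ‖². -/
theorem ticopd_gradient_drift
    {n d e : ℕ} (hn : 2 ≤ n) (hd : 1 ≤ d)
    (A : Matrix (Fin e) (Fin n) ℝ) (hA : IsIncidence A)
    -- Assumption 1
    (f : Fin n → (Fin d → ℝ) → ℝ) (gradf : Fin n → (Fin d → ℝ) → (Fin d → ℝ)) (L : ℝ)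
    (hdiff : ∀ i x, HasFDerivAt (f i) (dotCLM (gradf i x)) x)
    (hlip : ∀ i x y, enorm' (gradf i x - gradf i y) ≤ L * enorm' (x - y))
    -- dual variable in the range of Ãᵀ
    (lam : Fin n × Fin d → ℝ) (μv : Fin e × Fin d → ℝ) (hlam : lam = (Atil d A)ᵀ.mulVec μv)
    -- step sizes
    (α β θ : ℝ) (hα : 0 < α) (hθ : 0 < θ)
    (hβ : β = 1 - α * θ * specNorm (lapl d A))
    -- one primal step
    (X Xhat Xnext : Fin n × Fin d → ℝ)
    (hXnext : Xnext = β • X + (1 - β) • Xhat -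
        α • (gradF gradf X + lam + θ • (lapl d A).mulVec Xhat)) :
    sqnorm (gradF gradf (consVec n (xbar Xnext)) - gradF gradf (consVec n (xbar X))) ≤
      3 * α ^ 2 * n * L ^ 2 * sqnorm (gradfbar gradf (xbar X)) +
        3 * α ^ 2 * L ^ 4 * wnorm2 (Ktil n d) X +
        3 * α ^ 2 * θ ^ 2 * (specNorm (lapl d A)) ^ 2 * L ^ 2 * sqnorm (Xhat - X) := by
  have hn0 : 0 < n := by omega
  set M := specNorm (lapl d A)
  have hstep := xbar_step A hA gradf μv α β θ X Xhat
  rw [← hlam, ← hXnext] at hstep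
  have hβ' : 1 - β = α * θ * M := by rw [hβ]; ring
  have h3 := sqnorm_sub_sub_le ((1 - β) • xbar (Xhat - X)) (α • gradfbar gradf (xbar X))
    (α • xbar (gradF gradf X - gradF gradf (consVec n (xbar X))))
  rw [← hstep, hβ'] at h3
  simp only [sqnorm_smul] at h3
  have hcomp := n_mul_sqnorm_xbar_le hn0 (Xhat - X)
  have hgrad := (n_mul_sqnorm_xbar_le hn0
    (gradF gradf X - gradF gradf (consVec n (xbar X)))).trans
      (sqnorm_gradF_sub_le gradf L hlip _ _)
  rw [← wnorm2_Ktil hn0] at hgrad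
  have hdrift := sqnorm_gradF_sub_le gradf L hlip (consVec n (xbar Xnext)) (consVec n (xbar X))
  rw [sqnorm_consVec_sub] at hdrift
  have e1 := mul_le_mul_of_nonneg_left h3 (by positivity : 0 ≤ L ^ 2 * (n : ℝ))
  have e2 := mul_le_mul_of_nonneg_left hcomp
    (by positivity : 0 ≤ 3 * L ^ 2 * (α * θ * M) ^ 2)
  have e3 := mul_le_mul_of_nonneg_left hgrad (by positivity : 0 ≤ 3 * L ^ 2 * α ^ 2)
  linarith

end
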